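/- Let d, m ≥ 1, Q = [−1/2,1/2]^d, let h : ℝ^d → [0,∞) be measurable and supported in Q with H_{h,2} = ∫_Q h² ∈ (0,∞), let λ : ℝ^d → [0,∞)^m be measurable supported in Q with each h²λ^{(i)} and h²λ^{(i)}λ^{(j)} integrable, and let L₂ : ℝ^d → ℝ^{m×m} have integrable entries and satisfy L₂(−x) = L₂(x)ᵀ for all x ∈ ℝ^d. Define F^u(ω) = (2π)^{−d} diag(λ(u)) + (λ(u)λ(u)ᵀ) ⊙ 𝓕^{−1}(L₂)(ω) and F_h(ω) = (2π)^{−d} H_{h,2}^{−1} diag((∫_Q h²λ^{(i)})_i) + H_{h,2}^{−1} ((∫_Q h²λ^{(i)}λ^{(j)})_{i,j} ⊙ 𝓕^{−1}(L₂)(ω)). Then: (a) for every ω ∈ ℝ^d, F_h(ω) is Hermitian, i.e., F_h(ω)^{(i,j)} = conj(F_h(ω)^{(j,i)}) for all i,j; and (b) if moreover for a given ω the matrix F^u(ω) is positive semidefinite for every u ∈ Q, then F_h(ω) is positive semidefinite. -/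

import Mathlib

/-!
The pseudo-spectrum is a mixture of the local spectra with nonnegative weights:
`F_h(ω) = H⁻¹ ∫_Q h(u)² F^u(ω) du`, where `H = ∫_Q h²` (`pseudoSpec_eq_integral`). Hence its
quadratic form is the weighted average of the local quadratic forms, which gives positive
semidefiniteness. Conjugate symmetry comes from `L₂(-x) = L₂(x)ᵀ`: the substitution `x ↦ -x` turns
the transform of the real function `L₂⁽ⁱʲ⁾` into the complex conjugate of that of `L₂⁽ʲⁱ⁾`
(`fourierInv_conj`), while the weights `∫_Q h² λ⁽ⁱ⁾ λ⁽ʲ⁾` are real and symmetric in `i`, `j`.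
-/

open MeasureTheory
open scoped ComplexOrder

noncomputable section

namespace Stmt16

/-- The unit cube `Q = [-1/2, 1/2]^d`. -/
def Q (d : ℕ) : Set (Fin d → ℝ) := Set.Icc (fun _ => -(1/2)) (fun _ => 1/2)

/-- Inverse Fourier transform `𝓕⁻¹(g)(ω) = (2π)^{-d} ∫_{ℝ^d} g(x) e^{-i xᵀω} dx`. -/
def fourierInv (d : ℕ) (g : (Fin d → ℝ) → ℂ) (ω : Fin d → ℝ) : ℂ :=
  ((2 * Real.pi) ^ d : ℝ)⁻¹ *
    ∫ x : Fin d → ℝ, g x * Complex.exp (-(Complex.I * ((∑ j, x j * ω j : ℝ) : ℂ)))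

/-- The local spectrum `F^u(ω) = (2π)^{-d} diag(λ(u)) + (λ(u)λ(u)ᵀ) ⊙ 𝓕⁻¹(L₂)(ω)`
(for a real matrix-valued reduced covariance intensity `L₂`). -/
def localSpec (d m : ℕ) (lam : (Fin d → ℝ) → Fin m → ℝ)
    (L : (Fin d → ℝ) → Matrix (Fin m) (Fin m) ℝ)
    (u ω : Fin d → ℝ) : Matrix (Fin m) (Fin m) ℂ :=
  Matrix.of fun i j =>
    ((2 * Real.pi) ^ d : ℝ)⁻¹ * (if i = j then (lam u i : ℂ) else 0)
      + (lam u i : ℂ) * (lam u j : ℂ) * fourierInv d (fun x => (L x i j : ℂ)) ω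

/-- The pseudo-spectrum `F_h(ω)` (for a real matrix-valued `L₂`). -/
def pseudoSpec (d m : ℕ) (h : (Fin d → ℝ) → ℝ) (lam : (Fin d → ℝ) → Fin m → ℝ)
    (L : (Fin d → ℝ) → Matrix (Fin m) (Fin m) ℝ)
    (ω : Fin d → ℝ) : Matrix (Fin m) (Fin m) ℂ :=
  Matrix.of fun i j =>
    ((2 * Real.pi) ^ d : ℝ)⁻¹ * ((∫ u in Q d, h u ^ 2 : ℝ) : ℂ)⁻¹ *
        (if i = j then ((∫ u in Q d, h u ^ 2 * lam u i : ℝ) : ℂ) else 0)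
      + ((∫ u in Q d, h u ^ 2 : ℝ) : ℂ)⁻¹ *
          ((∫ u in Q d, h u ^ 2 * lam u i * lam u j : ℝ) : ℂ) *
          fourierInv d (fun x => (L x i j : ℂ)) ω

theorem fourierInv_conj (d : ℕ) (f g : (Fin d → ℝ) → ℝ) (hfg : ∀ x, f (-x) = g x)
    (ω : Fin d → ℝ) :
    (starRingEnd ℂ) (fourierInv d (fun x => (g x : ℂ)) ω) = fourierInv d (fun x => (f x : ℂ)) ω := by
  unfold fourierInv
  rw [map_mul, Complex.conj_ofReal, ← integral_conj]
  congr 1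
  rw [← integral_neg_eq_self (fun x : Fin d → ℝ =>
    (f x : ℂ) * Complex.exp (-(Complex.I * ((∑ j, x j * ω j : ℝ) : ℂ))))]
  refine integral_congr_ae (Filter.Eventually.of_forall fun x => ?_)
  simp [hfg, ← Complex.exp_conj]

theorem pseudoSpec_isHermitian (d m : ℕ) (h : (Fin d → ℝ) → ℝ) (lam : (Fin d → ℝ) → Fin m → ℝ)
    (L : (Fin d → ℝ) → Matrix (Fin m) (Fin m) ℝ)
    (hLsym : ∀ x, L (-x) = (L x).transpose) (ω : Fin d → ℝ) :
    (pseudoSpec d m h lam L ω).IsHermitian := by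
  ext i j
  have hF := fourierInv_conj d (fun x => L x i j) (fun x => L x j i)
    (fun x => by rw [hLsym, Matrix.transpose_apply]) ω
  have hw : ∫ u in Q d, h u ^ 2 * lam u j * lam u i = ∫ u in Q d, h u ^ 2 * lam u i * lam u j := by
    simp only [mul_right_comm]
  rw [Matrix.conjTranspose_apply]
  simp only [pseudoSpec, Matrix.of_apply, ← starRingEnd_apply, hw, map_add, map_mul, map_inv₀,
    Complex.conj_ofReal, hF]
  rcases eq_or_ne i j with rfl | hij
  · simp
  · simp [hij, hij.symm]

/-- The integrand `h(u)² F^u(ω)` written through the real weights `h² λ⁽ⁱ⁾` and `h² λ⁽ⁱ⁾ λ⁽ʲ⁾`. -/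
theorem sq_mul_localSpec (d m : ℕ) (h : (Fin d → ℝ) → ℝ) (lam : (Fin d → ℝ) → Fin m → ℝ)
    (L : (Fin d → ℝ) → Matrix (Fin m) (Fin m) ℝ) (u ω : Fin d → ℝ) (i j : Fin m) :
    ((h u ^ 2 : ℝ) : ℂ) * localSpec d m lam L u ω i j =
      ((h u ^ 2 * lam u i : ℝ) : ℂ) * (((2 * Real.pi) ^ d : ℝ)⁻¹ * (if i = j then 1 else 0))
        + ((h u ^ 2 * lam u i * lam u j : ℝ) : ℂ) * fourierInv d (fun x => (L x i j : ℂ)) ω := by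
  simp only [localSpec, Matrix.of_apply]
  split_ifs <;> push_cast <;> ring

theorem integrableOn_sq_mul_localSpec (d m : ℕ) (h : (Fin d → ℝ) → ℝ)
    (lam : (Fin d → ℝ) → Fin m → ℝ)
    (hint1 : ∀ i, IntegrableOn (fun u => h u ^ 2 * lam u i) (Q d))
    (hint2 : ∀ i j, IntegrableOn (fun u => h u ^ 2 * lam u i * lam u j) (Q d))
    (L : (Fin d → ℝ) → Matrix (Fin m) (Fin m) ℝ) (ω : Fin d → ℝ) (i j : Fin m) :
    IntegrableOn (fun u => ((h u ^ 2 : ℝ) : ℂ) * localSpec d m lam L u ω i j) (Q d) := by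
  simp only [sq_mul_localSpec]
  exact ((hint1 i).ofReal.mul_const _).add ((hint2 i j).ofReal.mul_const _)

/-- The integral representation `F_h(ω) = H⁻¹ ∫_Q h(u)² F^u(ω) du`, entrywise. -/
theorem pseudoSpec_eq_integral (d m : ℕ) (h : (Fin d → ℝ) → ℝ)
    (lam : (Fin d → ℝ) → Fin m → ℝ)
    (hint1 : ∀ i, IntegrableOn (fun u => h u ^ 2 * lam u i) (Q d))
    (hint2 : ∀ i j, IntegrableOn (fun u => h u ^ 2 * lam u i * lam u j) (Q d))
    (L : (Fin d → ℝ) → Matrix (Fin m) (Fin m) ℝ) (ω : Fin d → ℝ) (i j : Fin m) :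
    pseudoSpec d m h lam L ω i j = ((∫ u in Q d, h u ^ 2 : ℝ) : ℂ)⁻¹ *
      ∫ u in Q d, ((h u ^ 2 : ℝ) : ℂ) * localSpec d m lam L u ω i j := by
  simp only [sq_mul_localSpec]
  rw [integral_add ((hint1 i).ofReal.mul_const _) ((hint2 i j).ofReal.mul_const _),
    integral_mul_const, integral_mul_const, integral_complex_ofReal, integral_complex_ofReal]
  simp only [pseudoSpec, Matrix.of_apply]
  split_ifs <;> ring

/-- Proposition B.1(ii): (a) the pseudo-spectrum `F_h(ω)` is Hermitian (conjugate symmetric);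
(b) if for a given `ω` the local spectrum `F^u(ω)` is positive semidefinite for every
`u ∈ Q`, then `F_h(ω)` is positive semidefinite. -/
theorem pseudoSpec_hermitian_posSemidef
    (d m : ℕ) (hd : 1 ≤ d) (hm : 1 ≤ m)
    (h : (Fin d → ℝ) → ℝ) (hmeas : Measurable h) (h0 : ∀ x, 0 ≤ h x)
    (hsupp : Function.support h ⊆ Q d)
    (hH2int : IntegrableOn (fun u => h u ^ 2) (Q d))
    (hH2pos : 0 < ∫ u in Q d, h u ^ 2)
    (lam : (Fin d → ℝ) → Fin m → ℝ)
    (hlammeas : ∀ i, Measurable fun x => lam x i)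
    (hlampos : ∀ x i, 0 ≤ lam x i)
    (hlamsupp : ∀ i, (Function.support fun x => lam x i) ⊆ Q d)
    (hint1 : ∀ i, IntegrableOn (fun u => h u ^ 2 * lam u i) (Q d))
    (hint2 : ∀ i j, IntegrableOn (fun u => h u ^ 2 * lam u i * lam u j) (Q d))
    (L : (Fin d → ℝ) → Matrix (Fin m) (Fin m) ℝ)
    (hLint : ∀ i j, Integrable fun x => L x i j)
    (hLsym : ∀ x, L (-x) = (L x).transpose) :
    (∀ (ω : Fin d → ℝ) (i j : Fin m),
        pseudoSpec d m h lam L ω i j = (starRingEnd ℂ) (pseudoSpec d m h lam L ω j i))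
    ∧ ∀ ω : Fin d → ℝ,
        (∀ u ∈ Q d, (localSpec d m lam L u ω).PosSemidef) →
        (pseudoSpec d m h lam L ω).PosSemidef := by
  refine ⟨fun ω i j => ((pseudoSpec_isHermitian d m h lam L hLsym ω).apply i j).symm,
    fun ω hpos => .of_dotProduct_mulVec_nonneg (pseudoSpec_isHermitian d m h lam L hLsym ω)
      fun x => ?_⟩
  have hI := integrableOn_sq_mul_localSpec d m h lam hint1 hint2 L ω
  have hquad : dotProduct (star x) ((pseudoSpec d m h lam L ω).mulVec x) =
      ((∫ u in Q d, h u ^ 2 : ℝ) : ℂ)⁻¹ * ∫ u in Q d,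
        ((h u ^ 2 : ℝ) : ℂ) * dotProduct (star x) ((localSpec d m lam L u ω).mulVec x) := by
    have hexp : ∀ u, ((h u ^ 2 : ℝ) : ℂ) * dotProduct (star x) ((localSpec d m lam L u ω).mulVec x) =
        ∑ i, ∑ j, (((h u ^ 2 : ℝ) : ℂ) * localSpec d m lam L u ω i j) * (star (x i) * x j) := by
      intro u
      simp only [dotProduct, Matrix.mulVec, Finset.mul_sum, Pi.star_apply]
      exact Finset.sum_congr rfl fun i _ => Finset.sum_congr rfl fun j _ => by ring
    simp only [hexp]
    rw [integral_finsetSum _ fun i _ => integrable_finsetSum _ fun j _ => (hI i j).mul_const _]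
    simp only [dotProduct, Matrix.mulVec, Finset.mul_sum, Pi.star_apply]
    refine Finset.sum_congr rfl fun i _ => ?_
    rw [integral_finsetSum _ fun j _ => (hI i j).mul_const _, Finset.mul_sum]
    refine Finset.sum_congr rfl fun j _ => ?_
    rw [integral_mul_const, pseudoSpec_eq_integral d m h lam hint1 hint2]
    ring
  rw [hquad, ← Complex.ofReal_inv]
  refine mul_nonneg (Complex.zero_le_real.2 (inv_nonneg.2 hH2pos.le)) ?_
  exact integral_nonneg_of_ae <| (ae_restrict_iff' measurableSet_Icc).2 <| .of_forall fun u hu =>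
    mul_nonneg (Complex.zero_le_real.2 (sq_nonneg _)) ((hpos u hu).dotProduct_mulVec_nonneg x)

end Stmt16
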